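/- Let p be a prime and let K be a characteristic-zero field with a multiplicative nonarchimedean norm ‖·‖ such that ‖q‖ equals the p-adic absolute value of q for every rational number q (viewed in K). Let k₀ be an integer, let (k_n) be a sequence of integers with k_n > k₀ for all n and v_p(k_n − k₀) → ∞. Let α, α' ∈ K with α ≠ 0, let C ≥ 0 be a real constant, and let (a_n), (y_n) be sequences in K such that for all n: ‖a_n − α − α'·(k_n − k₀)‖ ≤ C·‖(k_n − k₀ : K)‖², y_n² − a_n·y_n + p^{k_n − 1} = 0, and ‖y_n‖ = ‖a_n‖. Then (y_n² − α²)/(k_n − k₀) → 2·α·α' in K. -/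

import Mathlib

/-!
Write `d = k - k₀`. The root equation reads `(y - a) y = -p ^ (k - 1)`, and `a = O(y)`, so
`y² - a² = (y - a)(y + a)` is `O(p ^ (k - 1))`. The bound `|d|⁻¹ ≤ |d|_p` shows that `p ^ (k - 1)`,
exponentially small in `d`, is `o(d)` `p`-adically. Hence `y²` has the same first order expansion
at `k₀` as `a²`.
-/

open Filter Topology Asymptotics

section Asymptotics

variable {ι K : Type*} [NormedField K] {l : Filter ι}

lemma isLittleO_of_norm_le_mul_norm_sq {E : Type*} [SeminormedAddCommGroup E] {u : ι → E}
    {d : ι → K} {C : ℝ} (hd : Tendsto d l (𝓝 0)) (hu : ∀ i, ‖u i‖ ≤ C * ‖d i‖ ^ 2) : u =o[l] d := by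
  have hsq : u =O[l] fun i => d i ^ 2 :=
    .of_bound C (.of_forall fun i => by simpa only [norm_pow] using hu i)
  exact hsq.trans_isLittleO ((isLittleO_pow_id one_lt_two).comp_tendsto hd)

lemma isLittleO_sq_sub_sq_sub_two_mul {a d : ι → K} {α α' : K} (hd : Tendsto d l (𝓝 0))
    (ha : (fun i => a i - α - α' * d i) =o[l] d) :
    (fun i => a i ^ 2 - α ^ 2 - 2 * α * α' * d i) =o[l] d := by
  have hlin : Tendsto (fun i => α' * d i) l (𝓝 0) := by simpa using hd.const_mul α'
  have hsub : Tendsto (fun i => a i - α) l (𝓝 0) := by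
    simpa using (ha.trans_tendsto hd).add hlin
  have hadd : (fun i => a i + α) =O[l] (1 : ι → K) := by
    have : Tendsto (fun i => a i + α) l (𝓝 (2 * α)) := by
      simpa [two_mul, add_assoc] using hsub.add_const (2 * α)
    exact this.isBigO_one K
  have hquad : (fun i => (a i - α - α' * d i) * (a i + α)) =o[l] d := by
    simpa using ha.mul_isBigO hadd
  have hcross : (fun i => α' * d i * (a i - α)) =o[l] d := by
    simpa using ((isBigO_refl d l).const_mul_left α').mul_isLittleO
      ((isLittleO_one_iff K).2 hsub)
  exact (hquad.add hcross).congr_left fun i => by ring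

lemma isBigO_sq_sub_sq_of_quadratic_root {a y e : ι → K}
    (hroot : ∀ᶠ i in l, y i ^ 2 - a i * y i + e i = 0) (hay : a =O[l] y) :
    (fun i => y i ^ 2 - a i ^ 2) =O[l] e := by
  have hfactor : (fun i => (y i - a i) * (y i + a i)) =O[l] fun i => (y i - a i) * y i :=
    (isBigO_refl _ l).mul ((isBigO_refl y l).add hay)
  have he : (fun i => (y i - a i) * y i) =ᶠ[l] fun i => -e i := by
    filter_upwards [hroot] with i hi
    linear_combination hi
  exact (hfactor.trans_eventuallyEq he).neg_right.congr (fun i => by ring) fun i => neg_neg _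

lemma tendsto_div_of_isLittleO_sub_mul {f d : ι → K} {c : K} (hd : ∀ᶠ i in l, d i ≠ 0)
    (h : (fun i => f i - c * d i) =o[l] d) : Tendsto (fun i => f i / d i) l (𝓝 c) := by
  have hlim : Tendsto (fun i => (f i - c * d i) / d i + c) l (𝓝 c) := by
    simpa using h.tendsto_div_nhds_zero.add_const c
  refine hlim.congr' ?_
  filter_upwards [hd] with i hi
  field_simp
  ring

lemma tendsto_sq_sub_sq_div_of_quadratic_root {a d e y : ι → K} {α α' : K}
    (hd : Tendsto d l (𝓝[≠] 0)) (ha : (fun i => a i - α - α' * d i) =o[l] d) (he : e =o[l] d)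
    (hroot : ∀ᶠ i in l, y i ^ 2 - a i * y i + e i = 0) (hay : a =O[l] y) :
    Tendsto (fun i => (y i ^ 2 - α ^ 2) / d i) l (𝓝 (2 * α * α')) := by
  obtain ⟨hd_zero, hd_ne⟩ := tendsto_nhdsWithin_iff.1 hd
  have hya := (isBigO_sq_sub_sq_of_quadratic_root hroot hay).trans_isLittleO he
  have haα := isLittleO_sq_sub_sq_sub_two_mul hd_zero ha
  exact tendsto_div_of_isLittleO_sub_mul hd_ne ((hya.add haα).congr_left fun i => by ring)

end Asymptotics

section PadicNorm

variable {p : ℕ} {K : Type*} [NormedDivisionRing K]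

lemma norm_intCast_eq_inv_pow_padicValInt
    (hcompat : ∀ q : ℚ, ‖(q : K)‖ = ((padicNorm p q : ℚ) : ℝ)) {m : ℤ} (hm : m ≠ 0) :
    ‖(m : K)‖ = (p : ℝ)⁻¹ ^ padicValInt p m := by
  have h := hcompat m
  rw [padicNorm.eq_zpow_of_nonzero (by exact_mod_cast hm), padicValRat.of_int] at h
  simpa using h

lemma intCast_ne_zero_of_norm_eq_padicNorm (hp : 0 < p)
    (hcompat : ∀ q : ℚ, ‖(q : K)‖ = ((padicNorm p q : ℚ) : ℝ)) {m : ℤ} (hm : m ≠ 0) :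
    (m : K) ≠ 0 := by
  rw [← norm_ne_zero_iff, norm_intCast_eq_inv_pow_padicValInt hcompat hm]
  positivity

lemma norm_natCast_self_eq_inv (hp : 1 < p)
    (hcompat : ∀ q : ℚ, ‖(q : K)‖ = ((padicNorm p q : ℚ) : ℝ)) : ‖(p : K)‖ = (p : ℝ)⁻¹ := by
  simpa [padicNorm.padicNorm_p hp] using hcompat p

lemma inv_norm_intCast_le_abs
    (hcompat : ∀ q : ℚ, ‖(q : K)‖ = ((padicNorm p q : ℚ) : ℝ)) (m : ℤ) :
    ‖(m : K)‖⁻¹ ≤ |(m : ℝ)| := by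
  rcases eq_or_ne m 0 with rfl | hm
  · simp
  · have hle : p ^ padicValInt p m ≤ m.natAbs :=
      Nat.le_of_dvd (Int.natAbs_pos.2 hm) pow_padicValNat_dvd
    rw [norm_intCast_eq_inv_pow_padicValInt hcompat hm, inv_pow, inv_inv, ← Int.cast_abs,
      Int.abs_eq_natAbs]
    exact_mod_cast hle

lemma tendsto_intCast_nhdsNE_zero_of_padicValInt {ι : Type*} {l : Filter ι} {m : ι → ℤ}
    (hp : 1 < p) (hcompat : ∀ q : ℚ, ‖(q : K)‖ = ((padicNorm p q : ℚ) : ℝ))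
    (hm : Tendsto (fun i => padicValInt p (m i)) l atTop) :
    Tendsto (fun i => (m i : K)) l (𝓝[≠] 0) := by
  have hp_inv : (p : ℝ)⁻¹ < 1 := inv_lt_one_of_one_lt₀ (by exact_mod_cast hp)
  have hm_ne : ∀ᶠ i in l, m i ≠ 0 := by
    filter_upwards [hm.eventually_gt_atTop 0] with i hi h
    simp [h] at hi
  have hpow : Tendsto (fun i => (p : ℝ)⁻¹ ^ padicValInt p (m i)) l (𝓝 0) :=
    (tendsto_pow_atTop_nhds_zero_of_lt_one (by positivity) hp_inv).comp hm
  refine tendsto_nhdsWithin_iff.2 ⟨tendsto_zero_iff_norm_tendsto_zero.2 (hpow.congr' ?_), ?_⟩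
  · exact hm_ne.mono fun i hi => (norm_intCast_eq_inv_pow_padicValInt hcompat hi).symm
  · exact hm_ne.mono fun i hi =>
      intCast_ne_zero_of_norm_eq_padicNorm (zero_lt_one.trans hp) hcompat hi

lemma zpow_isLittleO_intCast (hp : 1 < p)
    (hcompat : ∀ q : ℚ, ‖(q : K)‖ = ((padicNorm p q : ℚ) : ℝ)) :
    (fun m : ℤ => (p : K) ^ m) =o[atTop] fun m => (m : K) := by
  have hpow : Tendsto (fun n : ℕ => (p : K) ^ n / (n : K)) atTop (𝓝 0) := by
    have hp_inv : (p : ℝ)⁻¹ < 1 := inv_lt_one_of_one_lt₀ (by exact_mod_cast hp)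
    refine squeeze_zero_norm (fun n => ?_)
      (tendsto_self_mul_const_pow_of_lt_one (by positivity) hp_inv)
    have hn : ‖(n : K)‖⁻¹ ≤ n := by simpa using inv_norm_intCast_le_abs hcompat n
    rw [norm_div, norm_pow, norm_natCast_self_eq_inv hp hcompat, div_eq_inv_mul]
    gcongr
  have hne : ∀ᶠ n : ℕ in atTop, (n : K) ≠ 0 := by
    filter_upwards [eventually_ne_atTop 0] with n hn
    simpa using intCast_ne_zero_of_norm_eq_padicNorm (by lia) hcompat (Int.natCast_ne_zero.2 hn)
  rw [← Nat.map_cast_int_atTop, isLittleO_map]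
  refine isLittleO_of_tendsto' (hne.mono fun n hn h => ?_) ?_
  · exact absurd (by simpa using h) hn
  · simpa [Function.comp_def] using hpow

end PadicNorm

theorem zigzag_stmt_7_general {p : ℕ} (hp : p.Prime) {K : Type*} [NormedField K]
    (hcompat : ∀ q : ℚ, ‖(q : K)‖ = ((padicNorm p q : ℚ) : ℝ))
    {ι : Type*} {l : Filter ι} {k₀ : ℤ} {k : ι → ℤ} (hk : ∀ᶠ i in l, k₀ ≤ k i)
    (hval : Tendsto (fun i => padicValInt p (k i - k₀)) l atTop)
    {α α' : K} {a y : ι → K}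
    (ha : (fun i => a i - α - α' * ((k i - k₀ : ℤ) : K)) =o[l] fun i => ((k i - k₀ : ℤ) : K))
    (hroot : ∀ᶠ i in l, y i ^ 2 - a i * y i + (p : K) ^ (k i - 1) = 0)
    (hay : a =O[l] y) :
    Tendsto (fun i => (y i ^ 2 - α ^ 2) / ((k i - k₀ : ℤ) : K)) l (𝓝 (2 * α * α')) := by
  have hp_ne : (p : K) ≠ 0 := by
    simpa using
      intCast_ne_zero_of_norm_eq_padicNorm hp.pos hcompat (Int.natCast_ne_zero.2 hp.ne_zero)
  have hk_atTop : Tendsto (fun i => k i - k₀) l atTop := by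
    refine tendsto_atTop_mono' l ?_ (tendsto_natCast_atTop_atTop.comp hval)
    filter_upwards [hk] with i hi
    have : padicValInt p (k i - k₀) ≤ (k i - k₀).natAbs := Nat.padicValNat_le_self _
    simp only [Function.comp_apply]
    lia
  have he : (fun i => (p : K) ^ (k i - 1)) =o[l] fun i => ((k i - k₀ : ℤ) : K) := by
    refine (((zpow_isLittleO_intCast hp.one_lt hcompat).comp_tendsto hk_atTop).const_mul_left
      ((p : K) ^ (k₀ - 1))).congr_left fun i => ?_
    rw [Function.comp_apply, ← zpow_add₀ hp_ne]
    congr 1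
    ring
  exact tendsto_sq_sub_sq_div_of_quadratic_root
    (tendsto_intCast_nhdsNE_zero_of_padicValInt hp.one_lt hcompat hval) ha he hroot hay

/-- Convergence of the third blow-up coordinate: with the hypotheses of the previous
statement (prime `p`, characteristic-zero field `K` with multiplicative nonarchimedean
norm restricting to the `p`-adic absolute value on `ℚ`, integers `kₙ > k₀` with
`v_p(kₙ − k₀) → ∞`, `α ≠ 0`, `‖aₙ − α − α'(kₙ − k₀)‖ ≤ C‖kₙ − k₀‖²`,
`yₙ² − aₙyₙ + p^{kₙ−1} = 0` and `‖yₙ‖ = ‖aₙ‖`), one has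
`(yₙ² − α²)/(kₙ − k₀) → 2αα'`. -/
theorem zigzag_stmt_7 (p : ℕ) (hp : p.Prime)
    {K : Type*} [NormedField K] [CharZero K] [IsUltrametricDist K]
    (hcompat : ∀ q : ℚ, ‖(q : K)‖ = ((padicNorm p q : ℚ) : ℝ))
    (k₀ : ℤ) (k : ℕ → ℤ) (hk : ∀ n, k₀ < k n)
    (hval : Filter.Tendsto (fun n => padicValInt p (k n - k₀)) Filter.atTop Filter.atTop)
    (α α' : K) (hα : α ≠ 0) (C : ℝ) (hC : 0 ≤ C)
    (a y : ℕ → K)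
    (hTaylor : ∀ n, ‖a n - α - α' * ((k n - k₀ : ℤ) : K)‖ ≤ C * ‖((k n - k₀ : ℤ) : K)‖ ^ 2)
    (heq : ∀ n, (y n) ^ 2 - a n * y n + (p : K) ^ (k n - 1) = 0)
    (hnorm : ∀ n, ‖y n‖ = ‖a n‖) :
    Filter.Tendsto (fun n => ((y n) ^ 2 - α ^ 2) / ((k n - k₀ : ℤ) : K)) Filter.atTop
      (nhds (2 * α * α')) := by
  have hd := tendsto_intCast_nhdsNE_zero_of_padicValInt hp.one_lt hcompat hval
  exact zigzag_stmt_7_general hp hcompat (.of_forall fun n => (hk n).le) hval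
    (isLittleO_of_norm_le_mul_norm_sq (hd.mono_right nhdsWithin_le_nhds) hTaylor)
    (.of_forall heq) (isBigO_of_le _ fun n => (hnorm n).ge)
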